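/- Let {p, q, r, s} be a concave quadruple with center s, and suppose the angle ∠psq is at most π/2. Then the 4-cycle p s q r p is acute; in particular ∠rps, ∠psq, ∠sqr and ∠qrp are all at most π/2. -/

import Mathlib

open EuclideanGeometry Real

noncomputable section

abbrev Plane := EuclideanSpace ℝ (Fin 2)

/-!
The three angles at the center `s` add up to `2π`. In the triangles `prs` and `qrs`, the angle sum
`π` then bounds each of the other three angles of the 4-cycle `psqrp` by `∠psq`: for example
`∠rps ≤ π - ∠rsp = ∠psq + ∠qsr - π ≤ ∠psq`. For the angle at `r` this is Euclid I.21.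
-/

lemma exists_wbtw_wbtw_of_mem_convexHull_triple {𝕜 E : Type*} [Field 𝕜] [LinearOrder 𝕜]
    [IsStrictOrderedRing 𝕜] [AddCommGroup E] [Module 𝕜 E] {p q r s : E}
    (hs : s ∈ convexHull 𝕜 {p, q, r}) :
    ∃ y, Wbtw 𝕜 q y r ∧ Wbtw 𝕜 p s y := by
  simpa only [← convexJoin_singleton_segment, mem_convexJoin, Set.mem_singleton_iff,
    exists_eq_left, mem_segment_iff_wbtw] using hs

section AffineSpace

variable {V P : Type*} [NormedAddCommGroup V] [InnerProductSpace ℝ V] [MetricSpace P]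
  [NormedAddTorsor V P] {p q r s y : P}

lemma angle_add_angle_add_angle_eq_two_pi_of_wbtw (hy : Wbtw ℝ q y r) (hs : Wbtw ℝ p s y)
    (hp : p ≠ s) (hq : q ≠ s) (hr : r ≠ s) : ∠ p s q + ∠ q s r + ∠ r s p = 2 * π := by
  rcases eq_or_ne s y with rfl | hsy
  · have h_straight : ∠ q s r = π := Sbtw.angle₁₂₃_eq_pi ⟨hy, hq.symm, hr.symm⟩
    linarith [angle_add_angle_eq_pi_of_angle_eq_pi p h_straight, angle_comm r s p]
  · have h_straight : ∠ p s y = π := Sbtw.angle₁₂₃_eq_pi ⟨hs, hp.symm, hsy⟩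
    have h_split : ∠ q s y + ∠ y s r = ∠ q s r := angle_add_of_ne_of_ne hq.symm hr.symm hy
    linarith [angle_add_angle_eq_pi_of_angle_eq_pi q h_straight, angle_comm p s q,
      angle_add_angle_eq_pi_of_angle_eq_pi r h_straight, angle_comm y s r]

lemma angle_add_angle_le_pi (p q r : P) : ∠ r p q + ∠ r q p ≤ π := by
  rcases eq_or_ne p q with rfl | hpq
  -- By convention both angles are `π / 2` here.
  · simp
  · linarith [angle_add_angle_add_angle_eq_pi r hpq, angle_comm r p q, angle_nonneg p r q]

lemma angle_le_angle_of_angle_sum_eq_two_pi (h : ∠ p s q + ∠ q s r + ∠ r s p = 2 * π) :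
    ∠ r p s ≤ ∠ p s q := by
  linarith [angle_add_angle_le_pi p s r, angle_le_pi q s r]

lemma opposite_angle_le_angle_of_angle_sum_eq_two_pi
    (h : ∠ p s q + ∠ q s r + ∠ r s p = 2 * π) : ∠ q r p ≤ ∠ p s q :=
  calc
    ∠ q r p ≤ ∠ q r s + ∠ s r p := angle_le_angle_add_angle r q s p
    _ ≤ (π - ∠ q s r) + (π - ∠ r s p) := by
      linarith [angle_add_angle_le_pi r s q, angle_add_angle_le_pi r s p, angle_comm s r p,
        angle_comm r s p]
    _ = ∠ p s q := by linarith

end AffineSpace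

theorem concave_acute_four_cycle_general {V : Type*} [NormedAddCommGroup V]
    [InnerProductSpace ℝ V] {p q r s : V} (hs : s ∈ convexHull ℝ {p, q, r})
    (hp : p ≠ s) (hq : q ≠ s) :
    ∠ r p s ≤ ∠ p s q ∧ ∠ s q r ≤ ∠ p s q ∧ ∠ q r p ≤ ∠ p s q := by
  rcases eq_or_ne r s with rfl | hr
  · simp [angle_self_of_ne hp.symm, angle_self_of_ne hq.symm, angle_comm q r p, angle_nonneg]
  obtain ⟨y, hy, hsy⟩ := exists_wbtw_wbtw_of_mem_convexHull_triple hs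
  have h_sum : ∠ p s q + ∠ q s r + ∠ r s p = 2 * π :=
    angle_add_angle_add_angle_eq_two_pi_of_wbtw hy hsy hp hq hr
  have h_sum_swap : ∠ q s p + ∠ p s r + ∠ r s q = 2 * π := by
    linarith [angle_comm p s q, angle_comm q s r, angle_comm r s p]
  refine ⟨angle_le_angle_of_angle_sum_eq_two_pi h_sum, ?_,
    opposite_angle_le_angle_of_angle_sum_eq_two_pi h_sum⟩
  rw [angle_comm s q r, angle_comm p s q]
  exact angle_le_angle_of_angle_sum_eq_two_pi h_sum_swap

/-- Let `{p, q, r, s}` be a concave quadruple with center `s` (i.e. `s` lies in the interior of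
the triangle `pqr`), and suppose `∠psq ≤ π/2`. Then the 4-cycle `psqrp` is acute: the angles
`∠rps`, `∠psq`, `∠sqr`, `∠qrp` are all at most `π/2`. -/
theorem concave_acute_four_cycle
    (p q r s : Plane)
    (hne : p ≠ q ∧ p ≠ r ∧ p ≠ s ∧ q ≠ r ∧ q ≠ s ∧ r ≠ s)
    (hcenter : s ∈ interior (convexHull ℝ ({p, q, r} : Set Plane)))
    (hpsq : EuclideanGeometry.angle p s q ≤ π / 2) :
    EuclideanGeometry.angle r p s ≤ π / 2 ∧ EuclideanGeometry.angle p s q ≤ π / 2 ∧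
    EuclideanGeometry.angle s q r ≤ π / 2 ∧ EuclideanGeometry.angle q r p ≤ π / 2 := by
  obtain ⟨-, -, hps, -, hqs, -⟩ := hne
  obtain ⟨hp, hq, hr⟩ := concave_acute_four_cycle_general (interior_subset hcenter) hps hqs
  exact ⟨hp.trans hpsq, hpsq, hq.trans hpsq, hr.trans hpsq⟩
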